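/- arXiv:2204.01291 — 2 statements merged into one kernel-verified Lean document; each statement's English description precedes it below -/
import Mathlib

section
/- Let H be a real Hilbert space. A set U ⊆ H is open in the weak topology if and only if for every x ∈ U there exist finitely many points y₁, …, yₙ ∈ H \ {x} such that U_x(y₁) ∩ … ∩ U_x(yₙ) ⊆ U. In other words, the collection τ_w coincides with the collection of weakly open subsets of H. -/
/-!
Expanding `‖z - (y + t (x - y))‖²` in `t` shows that, for `y ≠ x`, the elementary set `U_x(y)` is
the open half-space `{z | 0 < ⟪x - y, z - y⟫}` (`mem_elemSet_iff`), which is weakly open and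
contains `x`. Conversely, by the Riesz representation theorem every half-space
`{z | a < f z}` with `f` a nonzero continuous functional and `a < f x` equals `U_x(y)`, where `y`
is the orthogonal projection of `x` onto the hyperplane `f = a` (`exists_elemSet_subset`). These
half-spaces form a subbase of weak neighbourhoods of `x`, so the filter generated by the `U_x(y)`,
`y ≠ x`, is the weak neighbourhood filter of `x` (`nhds_weakTop`).
-/

open RealInnerProductSpace

/-- The weak topology on a real Hilbert space `H`: the topology induced by all continuous
real-linear functionals, i.e. the topology of Mathlib's `WeakSpace ℝ H`. -/
noncomputable def weakTop (H : Type*) [NormedAddCommGroup H] [InnerProductSpace ℝ H] :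
    TopologicalSpace H :=
  show TopologicalSpace (WeakSpace ℝ H) from inferInstance

/-- The elementary set `U_x(y)`: points `z` whose nearest point on the segment `[x,y]`
is different from `y`; equivalently, there is a point of the segment strictly closer
to `z` than `y` is. -/
def elemSet {H : Type*} [NormedAddCommGroup H] [InnerProductSpace ℝ H] (x y : H) : Set H :=
  {z : H | ∃ p ∈ segment ℝ x y, ‖z - p‖ < ‖z - y‖}

/-- For `y ≠ x`, the elementary set `U_x(y)` is an open half-space whose bounding hyperplane
passes through `y` and is orthogonal to `x - y`. -/
lemma mem_elemSet_iff {H : Type*} [NormedAddCommGroup H] [InnerProductSpace ℝ H] {x y : H}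
    (hxy : y ≠ x) (z : H) : z ∈ elemSet x y ↔ 0 < inner ℝ (x - y) (z - y) := by
  have hpos : 0 < ‖x - y‖ ^ 2 := by
    have := norm_pos_iff.2 (sub_ne_zero.2 hxy.symm)
    positivity
  have key (t : ℝ) : ‖z - y - t • (x - y)‖ ^ 2
      = ‖z - y‖ ^ 2 - 2 * t * inner ℝ (x - y) (z - y) + t ^ 2 * ‖x - y‖ ^ 2 := by
    rw [norm_sub_sq_real, inner_smul_right, real_inner_comm, norm_smul, mul_pow,
      Real.norm_eq_abs, sq_abs]
    ring
  have hlt (t : ℝ) : ‖z - y - t • (x - y)‖ < ‖z - y‖ ↔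
      t ^ 2 * ‖x - y‖ ^ 2 < 2 * t * inner ℝ (x - y) (z - y) := by
    rw [← sq_lt_sq₀ (norm_nonneg _) (norm_nonneg _), key]
    constructor <;> intro h <;> linarith
  rw [elemSet, Set.mem_ofPred_eq, segment_symm, segment_eq_image']
  simp only [Set.exists_mem_image, ← sub_sub, hlt]
  constructor
  · rintro ⟨t, ⟨ht0, -⟩, h⟩
    by_contra! hneg
    nlinarith [mul_nonneg (sq_nonneg t) hpos.le, mul_nonneg ht0 (neg_nonneg.2 hneg)]
  · intro h
    -- The vertex of the quadratic in `t` is at `⟪x - y, z - y⟫ / ‖x - y‖²`, truncated to `[0, 1]`.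
    set c := inner ℝ (x - y) (z - y)
    have hm : 0 < min 1 (c / ‖x - y‖ ^ 2) := lt_min one_pos (div_pos h hpos)
    refine ⟨min 1 (c / ‖x - y‖ ^ 2), ⟨hm.le, min_le_left _ _⟩, ?_⟩
    have h2 : min 1 (c / ‖x - y‖ ^ 2) * ‖x - y‖ ^ 2 ≤ c :=
      (le_div_iff₀ hpos).1 (min_le_right _ _)
    nlinarith [mul_le_mul_of_nonneg_left h2 hm.le, mul_pos hm h]

/-- Each half-space `{z | a < f z}` containing `x` contains an elementary set `U_x(y)`, unless
`f = 0`, in which case it is everything. -/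
lemma exists_elemSet_subset {H : Type*} [NormedAddCommGroup H] [InnerProductSpace ℝ H]
    [CompleteSpace H] (x : H) (f : StrongDual ℝ H) (a : ℝ) (ha : a < f x) :
    (∀ z, a < f z) ∨ ∃ y, y ≠ x ∧ ∀ z ∈ elemSet x y, a < f z := by
  obtain ⟨v, rfl⟩ := (InnerProductSpace.toDual ℝ H).surjective f
  simp only [InnerProductSpace.toDual_apply_apply] at ha ⊢
  rcases eq_or_ne v 0 with rfl | hv
  · left
    simpa using ha
  right
  have hv' : 0 < ‖v‖ ^ 2 := by
    have := norm_pos_iff.2 hv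
    positivity
  -- `y = x - s • v` is the orthogonal projection of `x` onto the hyperplane `⟪v, ·⟫ = a`.
  obtain ⟨s, hs, hsv⟩ : ∃ s : ℝ, 0 < s ∧ s * ‖v‖ ^ 2 = inner ℝ v x - a :=
    ⟨(inner ℝ v x - a) / ‖v‖ ^ 2, div_pos (sub_pos.2 ha) hv', div_mul_cancel₀ _ hv'.ne'⟩
  have hy : x - s • v ≠ x := by
    simpa [sub_eq_self] using ⟨hs.ne', hv⟩
  refine ⟨x - s • v, hy, fun z hz => ?_⟩
  rw [mem_elemSet_iff hy, sub_sub_cancel, real_inner_smul_left] at hz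
  have h := pos_of_mul_pos_right hz hs.le
  rw [inner_sub_right, inner_sub_right, inner_smul_right, real_inner_self_eq_norm_sq] at h
  linarith

lemma continuous_weakTop {H : Type*} [NormedAddCommGroup H] [InnerProductSpace ℝ H]
    (f : StrongDual ℝ H) : @Continuous H ℝ (weakTop H) _ f :=
  WeakBilin.eval_continuous (topDualPairing ℝ H).flip f

/-- The elementary sets at `x` form a subbase of the weak neighbourhood filter of `x`. -/
lemma nhds_weakTop {H : Type*} [NormedAddCommGroup H] [InnerProductSpace ℝ H] [CompleteSpace H]
    (x : H) :
    @nhds H (weakTop H) x = ⨅ y : {y : H // y ≠ x}, Filter.principal (elemSet x y) := by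
  apply le_antisymm
  · refine le_iInf fun ⟨y, hy⟩ => Filter.le_principal_iff.2 ?_
    have hset : elemSet x y = InnerProductSpace.toDual ℝ H (x - y) ⁻¹'
        Set.Ioi (inner ℝ (x - y) y) := by
      ext z
      rw [mem_elemSet_iff hy, inner_sub_right, sub_pos]
      rfl
    have hopen : @IsOpen H (weakTop H) (elemSet x y) := by
      rw [hset]
      exact @IsOpen.preimage H ℝ (weakTop H) _ _ (continuous_weakTop _) _ isOpen_Ioi
    refine @IsOpen.mem_nhds H (weakTop H) x _ hopen ?_
    rw [mem_elemSet_iff hy, real_inner_self_eq_norm_sq]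
    have := norm_pos_iff.2 (sub_ne_zero.2 hy.symm)
    positivity
  · have hlow (f : StrongDual ℝ H) (a : ℝ) (ha : a < f x) :
        ∀ᶠ z in ⨅ y : {y : H // y ≠ x}, Filter.principal (elemSet x (y : H)), a < f z := by
      rcases exists_elemSet_subset x f a ha with h | ⟨y, hy, h⟩
      · exact Filter.Eventually.of_forall h
      · filter_upwards [Filter.mem_iInf_of_mem (⟨y, hy⟩ : {y : H // y ≠ x})
          (Filter.mem_principal_self _)] with z hz using h z hz
    have htend (f : StrongDual ℝ H) : Filter.Tendsto f
        (⨅ y : {y : H // y ≠ x}, Filter.principal (elemSet x (y : H))) (nhds (f x)) := by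
      refine tendsto_order.2 ⟨hlow f, fun b hb => ?_⟩
      -- Upper bounds on `f` are lower bounds on `-f`.
      filter_upwards [hlow (-f) (-b) (by simpa using hb)] with z hz
      simpa using hz
    have hind : weakTop H = TopologicalSpace.induced
        (fun (z : H) (f : StrongDual ℝ H) => f z) Pi.topologicalSpace := rfl
    rw [hind, nhds_induced, ← Filter.tendsto_iff_comap]
    exact tendsto_pi_nhds.2 htend

theorem stmt_2 {H : Type*} [NormedAddCommGroup H] [InnerProductSpace ℝ H] [CompleteSpace H]
    (U : Set H) :
    @IsOpen H (weakTop H) U ↔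
      ∀ x ∈ U, ∃ Y : Finset H, (∀ y ∈ Y, y ≠ x) ∧ (⋂ y ∈ Y, elemSet x y) ⊆ U := by
  classical
  rw [@isOpen_iff_mem_nhds H (weakTop H)]
  refine forall₂_congr fun x _ => ?_
  rw [nhds_weakTop, (Filter.hasBasis_iInf_principal_finite _).mem_iff]
  constructor
  · rintro ⟨t, ht, hU⟩
    refine ⟨ht.toFinset.image Subtype.val, ?_, ?_⟩
    · intro y hy
      obtain ⟨w, -, rfl⟩ := Finset.mem_image.1 hy
      exact w.2
    · refine subset_trans (fun z hz => ?_) hU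
      simp only [Set.mem_iInter] at hz ⊢
      exact fun w hw => hz w (Finset.mem_image_of_mem _ (ht.mem_toFinset.2 hw))
  · rintro ⟨Y, hY, hU⟩
    refine ⟨Subtype.val ⁻¹' (Y : Set H), Y.finite_toSet.preimage
      Subtype.val_injective.injOn, subset_trans (fun z hz => ?_) hU⟩
    simp only [Set.mem_iInter] at hz ⊢
    exact fun y hy => hz ⟨y, hY y hy⟩ hy
end

section
/- Let H be an infinite-dimensional real Hilbert space. Then the weak topology on H is not sequential: there exists a subset A ⊆ H that is weakly sequentially closed (every sequence in A converging in the weak topology has its limit in A) but not closed in the weak topology. -/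
/-!
The set is `A = {√(n+1) • e n | n : ℕ}` for an orthonormal sequence `e`.

A weakly convergent sequence in `A` is norm bounded by the Banach–Steinhaus theorem, so it takes
only finitely many values; since functionals separate points, its weak limit is one of them.
On the other hand `0 ∉ A` is in the weak closure of `A`: a weak neighbourhood of `0` missing `A`
would give finitely many vectors `y i` and constants `c i` with
`1 / (n + 1) ≤ ∑ i, c i * ⟪e n, y i⟫ ^ 2` for every `n`, and by Bessel's inequality the right-hand side is summable in `n`, whereas the
harmonic series diverges.
-/

open RealInnerProductSpace

open Filter Topology

section

variable {H : Type*} [NormedAddCommGroup H] [InnerProductSpace ℝ H]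

lemma exists_orthonormal_nat (hinf : ¬ FiniteDimensional ℝ H) :
    ∃ e : ℕ → H, Orthonormal ℝ e := by
  let b := Module.Basis.ofVectorSpace ℝ H
  have : Infinite (Module.Basis.ofVectorSpaceIndex ℝ H) := by
    by_contra h
    rw [not_infinite_iff_finite] at h
    exact hinf (Module.Finite.of_basis b)
  exact ⟨_, InnerProductSpace.gramSchmidtNormed_orthonormal
    (b.linearIndependent.comp _ (Infinite.natEmbedding _).injective)⟩

lemma tendsto_apply_of_tendsto_weakTop {a : ℕ → H} {x : H}
    (h : Tendsto a atTop (@nhds H (weakTop H) x)) (f : StrongDual ℝ H) :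
    Tendsto (fun k => f (a k)) atTop (𝓝 (f x)) :=
  have hf : @Continuous H ℝ (weakTop H) _ f :=
    WeakBilin.eval_continuous (topDualPairing ℝ H).flip f
  (@Continuous.tendsto H ℝ (weakTop H) _ f hf x).comp h

lemma tendsto_inner_of_tendsto_weakTop {a : ℕ → H} {x : H}
    (h : Tendsto a atTop (@nhds H (weakTop H) x)) (y : H) :
    Tendsto (fun k => ⟪y, a k⟫) atTop (𝓝 ⟪y, x⟫) := by
  simpa using tendsto_apply_of_tendsto_weakTop h (innerSL ℝ y)

lemma exists_norm_le_of_tendsto_weakTop [CompleteSpace H] {a : ℕ → H} {x : H}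
    (h : Tendsto a atTop (@nhds H (weakTop H) x)) : ∃ C, ∀ k, ‖a k‖ ≤ C := by
  have hb : ∃ C, ∀ k, ‖innerSL ℝ (a k)‖ ≤ C := by
    refine banach_steinhaus fun y => ?_
    obtain ⟨C, hC⟩ := (tendsto_inner_of_tendsto_weakTop h y).norm.bddAbove_range
    refine ⟨C, fun k => ?_⟩
    have := hC ⟨k, rfl⟩
    rwa [innerSL_apply_apply, real_inner_comm]
  simpa using hb

/-- A sequence that converges weakly to `x` eventually avoids any given point other than `x`. -/
lemma eventually_ne_of_tendsto_weakTop {a : ℕ → H} {x : H}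
    (h : Tendsto a atTop (@nhds H (weakTop H) x)) {v : H} (hv : v ≠ x) :
    ∀ᶠ k in atTop, a k ≠ v := by
  -- The functional `⟪x - v, ·⟫` separates `x` from `v`.
  have hne : ⟪x - v, x⟫ ≠ ⟪x - v, v⟫ := by
    intro heq
    rw [← sub_eq_zero, ← inner_sub_right, inner_self_eq_zero, sub_eq_zero] at heq
    exact hv heq.symm
  filter_upwards [(tendsto_inner_of_tendsto_weakTop h (x - v)).eventually_ne hne] with k hk hkv
  exact hk (by rw [hkv])

/-- Every weak neighbourhood of `0` contains a basic one, cut out by finitely many vectors. -/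
lemma exists_finset_of_mem_nhds_weakTop_zero [CompleteSpace H] {U : Set H}
    (hU : U ∈ @nhds H (weakTop H) 0) :
    ∃ (I : Finset (StrongDual ℝ H)) (y : StrongDual ℝ H → H) (ε : StrongDual ℝ H → ℝ),
      (∀ i, 0 < ε i) ∧ ∀ z : H, (∀ i ∈ I, |⟪z, y i⟫| < ε i) → z ∈ U := by
  have htop : weakTop H = TopologicalSpace.induced
      (fun (x : H) (f : StrongDual ℝ H) => f x) Pi.topologicalSpace := rfl
  rw [htop, nhds_induced, nhds_pi, mem_comap] at hU
  obtain ⟨V, hV, hVU⟩ := hU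
  obtain ⟨I, hI, t, ht, htV⟩ := Filter.mem_pi.1 hV
  simp only [map_zero, Metric.mem_nhds_iff] at ht
  choose ε hε hεt using ht
  refine ⟨hI.toFinset, fun f => (InnerProductSpace.toDual ℝ H).symm f, ε, hε, fun z hz => ?_⟩
  refine hVU (htV fun f hf => hεt f ?_)
  have := hz f (hI.mem_toFinset.2 hf)
  rw [real_inner_comm, InnerProductSpace.toDual_symm_apply] at this
  simpa using this

/-- `0` lies in the weak closure of `{√(n+1) • e n}`, so this set could only be weakly closed if it
contained `0`. A weak neighbourhood of `0` missing it would contradict Bessel and the divergence of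
the harmonic series. -/
lemma zero_mem_of_isClosed_weakTop [CompleteSpace H] {e : ℕ → H} (he : Orthonormal ℝ e)
    (hcl : @IsClosed H (weakTop H) (Set.range fun n : ℕ => √((n : ℝ) + 1) • e n)) :
    (0 : H) ∈ Set.range fun n : ℕ => √((n : ℝ) + 1) • e n := by
  by_contra h0
  obtain ⟨I, y, ε, hε, hsub⟩ := exists_finset_of_mem_nhds_weakTop_zero
    (@IsOpen.mem_nhds H (weakTop H) 0 _ (@IsClosed.isOpen_compl H (weakTop H) _ hcl) h0)
  have hsum : Summable fun n => ∑ i ∈ I, (ε i ^ 2)⁻¹ * ‖⟪e n, y i⟫‖ ^ 2 :=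
    summable_sum fun i _ => (he.inner_products_summable (y i)).mul_left _
  have hle : ∀ n : ℕ, 1 / ((n + 1 : ℕ) : ℝ) ≤ ∑ i ∈ I, (ε i ^ 2)⁻¹ * ‖⟪e n, y i⟫‖ ^ 2 := by
    intro n
    obtain ⟨i, hi, hin⟩ : ∃ i ∈ I, ε i ≤ |⟪√((n : ℝ) + 1) • e n, y i⟫| := by
      by_contra! hlt
      exact hsub _ hlt ⟨n, rfl⟩
    refine le_trans ?_ (Finset.single_le_sum
      (f := fun i => (ε i ^ 2)⁻¹ * ‖⟪e n, y i⟫‖ ^ 2) (fun j _ => by positivity) hi)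
    have hn : (0 : ℝ) < n + 1 := by positivity
    have hsq : ε i ^ 2 ≤ (n + 1) * ‖⟪e n, y i⟫‖ ^ 2 := by
      have := pow_le_pow_left₀ (hε i).le hin 2
      rwa [real_inner_smul_left, abs_mul, mul_pow, sq_abs, Real.sq_sqrt hn.le] at this
    have := hε i
    push_cast
    rw [inv_mul_eq_div, div_le_div_iff₀ hn (by positivity)]
    linarith
  exact Real.not_summable_one_div_natCast ((summable_nat_add_iff 1).1
    (Summable.of_nonneg_of_le (fun n => by positivity) hle hsum))

end

theorem stmt_6 {H : Type*} [NormedAddCommGroup H] [InnerProductSpace ℝ H] [CompleteSpace H]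
    (hinf : ¬ FiniteDimensional ℝ H) :
    ∃ A : Set H,
      (∀ a : ℕ → H, (∀ k, a k ∈ A) →
        ∀ x : H, Filter.Tendsto a Filter.atTop (@nhds H (weakTop H) x) → x ∈ A) ∧
      ¬ @IsClosed H (weakTop H) A := by
  obtain ⟨e, he⟩ := exists_orthonormal_nat hinf
  refine ⟨Set.range fun n : ℕ => √((n : ℝ) + 1) • e n, fun a ha x hx => ?_, fun hcl => ?_⟩
  · choose n hn using ha
    obtain ⟨C, hC⟩ := exists_norm_le_of_tendsto_weakTop hx
    obtain ⟨N, hN⟩ := exists_nat_gt (C ^ 2)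
    have hnN : ∀ k, n k < N := by
      intro k
      have h1 := hC k
      rw [← hn k, norm_smul, he.1, mul_one, Real.norm_of_nonneg (Real.sqrt_nonneg _)] at h1
      have h2 := pow_le_pow_left₀ (Real.sqrt_nonneg _) h1 2
      rw [Real.sq_sqrt (by positivity)] at h2
      have h3 : (n k : ℝ) < N := by linarith
      exact_mod_cast h3
    -- Only the finitely many values with index below `N` occur; if none were `x`, the sequence
    -- would eventually avoid them all.
    by_contra hxA
    have hev : ∀ᶠ k in atTop, ∀ m ∈ Set.Iio N, a k ≠ √((m : ℝ) + 1) • e m :=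
      (eventually_all_finite (Set.finite_Iio N)).2 fun m _ =>
        eventually_ne_of_tendsto_weakTop hx fun h => hxA ⟨m, h⟩
    obtain ⟨k, hk⟩ := hev.exists
    exact hk (n k) (hnN k) (hn k).symm
  · obtain ⟨n, hn⟩ := zero_mem_of_isClosed_weakTop he hcl
    have hpos : √((n : ℝ) + 1) ≠ 0 := by positivity
    exact (smul_ne_zero hpos (he.ne_zero n)) hn
end
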